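/- Let A, B, C ⊆ ℝ^d with A an affine subspace (as a set), B and C convex, and C ⊆ A. Then A ∩ conv(B ∪ C) = conv((A ∩ B) ∪ C), where conv denotes the convex hull over ℝ. -/

import Mathlib

/-!
Replacing `C` by `conv C`, which still lies in `A`, changes neither hull, so let `C` be convex.
A point of `conv (B ∪ C)` outside `B ∪ C` lies on a segment from some `b ∈ B` to some `c ∈ C`.
If it lies in `A`, then, unless it equals `c`, the line through it and `c` is contained in `A` and
passes through `b`; so `b ∈ A ∩ B`.
-/

section

variable {𝕜 E : Type*} [Field 𝕜] [LinearOrder 𝕜] [IsStrictOrderedRing 𝕜]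
  [AddCommGroup E] [Module 𝕜 E]

theorem left_mem_affineSubspace_of_wbtw {P : Type*} [AddTorsor E P] {A : AffineSubspace 𝕜 P}
    {x y z : P} (hxyz : Wbtw 𝕜 x y z) (hyz : y ≠ z) (hy : y ∈ A) (hz : z ∈ A) : x ∈ A :=
  affineSpan_pair_le_of_mem_of_mem hz hy (hxyz.symm.right_mem_affineSpan_of_left_ne hyz.symm)

variable {A : AffineSubspace 𝕜 E} {B C : Set E}

theorem union_affineSubspace_inter_convexJoin (hCA : C ⊆ A) :
    C ∪ (A : Set E) ∩ convexJoin 𝕜 B C = C ∪ convexJoin 𝕜 (A ∩ B) C := by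
  apply subset_antisymm
  · refine Set.union_subset Set.subset_union_left ?_
    rintro x ⟨hxA, hx⟩
    obtain ⟨b, hb, c, hc, hxbc⟩ := mem_convexJoin.mp hx
    obtain rfl | hxc := eq_or_ne x c
    · exact .inl hc
    · have hbA : b ∈ A :=
        left_mem_affineSubspace_of_wbtw (mem_segment_iff_wbtw.mp hxbc) hxc hxA (hCA hc)
      exact .inr (mem_convexJoin.mpr ⟨b, ⟨hbA, hb⟩, c, hc, hxbc⟩)
  · exact Set.union_subset_union_right C <| Set.subset_inter
      (convexJoin_subset Set.inter_subset_left hCA A.convex)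
      (convexJoin_mono_left Set.inter_subset_right)

theorem convexHull_union_eq_union_convexJoin (hB : Convex 𝕜 B) (hC : Convex 𝕜 C) :
    convexHull 𝕜 (B ∪ C) = B ∪ (C ∪ convexJoin 𝕜 B C) := by
  obtain rfl | hB₀ := B.eq_empty_or_nonempty
  · simp [hC.convexHull_eq]
  obtain rfl | hC₀ := C.eq_empty_or_nonempty
  · simp [hB.convexHull_eq]
  rw [hB.convexHull_union hC hB₀ hC₀, Set.union_eq_right.mpr (subset_convexJoin_right hB₀),
    Set.union_eq_right.mpr (subset_convexJoin_left hC₀)]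

theorem affine_inter_convexHull_general (hB : Convex 𝕜 B) (hCA : C ⊆ A) :
    (A : Set E) ∩ convexHull 𝕜 (B ∪ C) = convexHull 𝕜 ((A : Set E) ∩ B ∪ C) := by
  wlog hC : Convex 𝕜 C generalizing C
  · rw [← convexHull_convexHull_union_right B C, ← convexHull_convexHull_union_right (A ∩ B) C]
    exact this (convexHull_min hCA A.convex) (convex_convexHull 𝕜 C)
  calc (A : Set E) ∩ convexHull 𝕜 (B ∪ C)
    _ = (A : Set E) ∩ (B ∪ (C ∪ convexJoin 𝕜 B C)) := by
      rw [convexHull_union_eq_union_convexJoin hB hC]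
    _ = (A : Set E) ∩ B ∪ (C ∪ (A : Set E) ∩ convexJoin 𝕜 B C) := by
      rw [Set.inter_union_distrib_left, Set.inter_union_distrib_left, Set.inter_eq_right.mpr hCA]
    _ = (A : Set E) ∩ B ∪ (C ∪ convexJoin 𝕜 (A ∩ B) C) := by
      rw [union_affineSubspace_inter_convexJoin hCA]
    _ = convexHull 𝕜 ((A : Set E) ∩ B ∪ C) :=
      (convexHull_union_eq_union_convexJoin (A.convex.inter hB) hC).symm

end

/-- Intersection of an affine set with the convex hull of the union of two
convex sets, one of which is contained in the affine set:
`A ∩ conv(B ∪ C) = conv((A ∩ B) ∪ C)`. -/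
theorem affine_inter_convexHull (d : ℕ) (A : AffineSubspace ℝ (Fin d → ℝ))
    (B C : Set (Fin d → ℝ)) (hB : Convex ℝ B) (hC : Convex ℝ C)
    (hCA : C ⊆ (A : Set (Fin d → ℝ))) :
    (A : Set (Fin d → ℝ)) ∩ convexHull ℝ (B ∪ C)
      = convexHull ℝ (((A : Set (Fin d → ℝ)) ∩ B) ∪ C) :=
  affine_inter_convexHull_general hB hCA
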